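/- Let L be a complete orthomodular lattice and let z ∈ L satisfy ⊥ < z < ⊤. Then the following are equivalent: (a) for every nontrivial complete atomic Boolean subalgebra B of L and all x, y ∈ L, δ_B(x ⊓ y) = δ_B(x) ⊓ δ_B(y); (b) every element of L equals ⊥, z, zᗮ, or ⊤. -/

import Mathlib

/-- The daseinisation of `x` to a subset `B` of a complete lattice:
`δ_B(x) := sInf {y ∈ B | x ≤ y}`. -/
def das {L : Type*} [CompleteLattice L] (B : Set L) (x : L) : L :=
  sInf {y ∈ B | x ≤ y}

/-- `a` is an atom of the subset `C`: `a ∈ C`, `a ≠ ⊥`, and every element of `C`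
strictly below `a` is `⊥`. -/
def IsAtomOf {L : Type*} [CompleteLattice L] (C : Set L) (a : L) : Prop :=
  a ∈ C ∧ a ≠ ⊥ ∧ ∀ y ∈ C, y < a → y = ⊥

/-- `B` is a nontrivial complete atomic Boolean subalgebra of `L` (with respect to
the orthocomplementation `oc`). -/
def IsCABS {L : Type*} [CompleteLattice L] (oc : L → L) (B : Set L) : Prop :=
  (∀ S ⊆ B, sInf S ∈ B) ∧ (∀ S ⊆ B, sSup S ∈ B) ∧
  (∀ b ∈ B, oc b ∈ B) ∧
  (∀ p ∈ B, ∀ q ∈ B, ∀ r ∈ B,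
    p ⊓ (q ⊔ r) = (p ⊓ q) ⊔ (p ⊓ r) ∧ p ⊔ (q ⊓ r) = (p ⊔ q) ⊓ (p ⊔ r)) ∧
  (∀ b ∈ B, b = sSup {a | IsAtomOf B a ∧ a ≤ b}) ∧
  (∃ b ∈ B, b ≠ ⊥ ∧ b ≠ ⊤)

/-!
If `a` and `b` are complementary and nontrivial, then `{⊥, a, b, ⊤}` is a complete atomic Boolean
subalgebra. An element below neither `a` nor `b` has daseinisation `⊤` to it, so when daseinisation
preserves meets, its complement is `⊥` and the element is `⊤`. Hence of two nontrivial elements,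
each lies below the other or below the complement of the other. If `v ≤ u`, then `u ≤ vᗮ` is
impossible because it would give `v ≤ vᗮ`, so `u ≤ v`: the nontrivial elements form an antichain.
As every nontrivial `w` lies below `z` or `zᗮ`, it is one of the two. Conversely, a nontrivial
subalgebra of `{⊥, z, zᗮ, ⊤}` is everything, and daseinisation to it is the identity.
-/

section IsCompl

theorem right_ne_bot_of_isCompl {L : Type*} [Lattice L] [BoundedOrder L] {a b : L}
    (hab : IsCompl a b) (ha : a ≠ ⊤) : b ≠ ⊥ :=
  fun hb ↦ ha (eq_top_of_isCompl_bot (hb ▸ hab))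

theorem right_ne_top_of_isCompl {L : Type*} [Lattice L] [BoundedOrder L] {a b : L}
    (hab : IsCompl a b) (ha : a ≠ ⊥) : b ≠ ⊤ :=
  fun hb ↦ ha (eq_bot_of_isCompl_top (hb ▸ hab))

theorem supClosed_bot_pair_top {L : Type*} [SemilatticeSup L] [BoundedOrder L] {a b : L}
    (hab : Codisjoint a b) : SupClosed ({⊥, a, b, ⊤} : Set L) := by
  rintro p (rfl | rfl | rfl | rfl) q (rfl | rfl | rfl | rfl) <;>
    simp [hab.eq_top, hab.symm.eq_top]

theorem infClosed_bot_pair_top {L : Type*} [SemilatticeInf L] [BoundedOrder L] {a b : L}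
    (hab : Disjoint a b) : InfClosed ({⊥, a, b, ⊤} : Set L) := by
  rintro p (rfl | rfl | rfl | rfl) q (rfl | rfl | rfl | rfl) <;>
    simp [hab.eq_bot, hab.symm.eq_bot]

theorem distrib_bot_pair_top {L : Type*} [Lattice L] [BoundedOrder L] {a b p q r : L}
    (hab : IsCompl a b) (hp : p ∈ ({⊥, a, b, ⊤} : Set L)) (hq : q ∈ ({⊥, a, b, ⊤} : Set L))
    (hr : r ∈ ({⊥, a, b, ⊤} : Set L)) :
    p ⊓ (q ⊔ r) = (p ⊓ q) ⊔ (p ⊓ r) ∧ p ⊔ (q ⊓ r) = (p ⊔ q) ⊓ (p ⊔ r) := by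
  rcases hp with rfl | rfl | rfl | rfl <;> rcases hq with rfl | rfl | rfl | rfl <;>
    rcases hr with rfl | rfl | rfl | rfl <;>
    simp [hab.inf_eq_bot, hab.symm.inf_eq_bot, hab.sup_eq_top, hab.symm.sup_eq_top]

variable {L : Type*} [CompleteLattice L] {a b : L}

theorem isAtomOf_bot_pair_top_left (hab : Disjoint a b) (ha : a ≠ ⊥) :
    IsAtomOf ({⊥, a, b, ⊤} : Set L) a := by
  refine ⟨by simp, ha, ?_⟩
  rintro y (rfl | rfl | rfl | rfl) hy
  · rfl
  · exact absurd hy (lt_irrefl _)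
  · exact hab.symm.eq_bot_of_le hy.le
  · exact absurd hy not_top_lt

theorem isAtomOf_bot_pair_top_right (hab : Disjoint a b) (hb : b ≠ ⊥) :
    IsAtomOf ({⊥, a, b, ⊤} : Set L) b :=
  Set.insert_comm a b {⊤} ▸ isAtomOf_bot_pair_top_left hab.symm hb

theorem sSup_isAtomOf_bot_pair_top (hab : IsCompl a b) (ha : a ≠ ⊥) (hb : b ≠ ⊥) {x : L}
    (hx : x ∈ ({⊥, a, b, ⊤} : Set L)) :
    sSup {c | IsAtomOf ({⊥, a, b, ⊤} : Set L) c ∧ c ≤ x} = x := by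
  have atom_a := isAtomOf_bot_pair_top_left hab.disjoint ha
  have atom_b := isAtomOf_bot_pair_top_right hab.disjoint hb
  refine le_antisymm (sSup_le fun c hc ↦ hc.2) ?_
  rcases hx with rfl | rfl | rfl | rfl
  · exact bot_le
  · exact le_sSup ⟨atom_a, le_rfl⟩
  · exact le_sSup ⟨atom_b, le_rfl⟩
  · exact hab.sup_eq_top.ge.trans
      (sup_le (le_sSup ⟨atom_a, le_top⟩) (le_sSup ⟨atom_b, le_top⟩))

end IsCompl

section Complementation

variable {L : Type*} [CompleteLattice L] {oc : L → L} {z : L}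

theorem isCABS_bot_pair_top (hc : ∀ x, IsCompl x (oc x)) (h_inv : Function.Involutive oc)
    (hz_bot : z ≠ ⊥) (hz_top : z ≠ ⊤) : IsCABS oc {⊥, z, oc z, ⊤} := by
  have oc_bot : oc ⊥ = ⊤ := eq_top_of_bot_isCompl (hc ⊥)
  have oc_top : oc ⊤ = ⊥ := eq_bot_of_top_isCompl (hc ⊤)
  have hfin : ({⊥, z, oc z, ⊤} : Set L).Finite := Set.toFinite _
  have hoz_bot : oc z ≠ ⊥ := right_ne_bot_of_isCompl (hc z) hz_top
  refine ⟨fun S hS ↦ ?_, fun S hS ↦ ?_, ?_,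
    fun p hp q hq r hr ↦ distrib_bot_pair_top (hc z) hp hq hr,
    fun b hb ↦ (sSup_isAtomOf_bot_pair_top (hc z) hz_bot hoz_bot hb).symm,
    z, by simp, hz_bot, hz_top⟩
  · exact (infClosed_bot_pair_top (hc z).disjoint).sInf_mem (hfin.subset hS) (by simp) hS
  · exact (supClosed_bot_pair_top (hc z).codisjoint).sSup_mem (hfin.subset hS) (by simp) hS
  · rintro b (rfl | rfl | rfl | rfl) <;> simp [oc_bot, oc_top, h_inv _]

theorem IsCABS.mem_of_forall_eq {B : Set L} (hB : IsCABS oc B) (h_inv : Function.Involutive oc)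
    (hL : ∀ w : L, w = ⊥ ∨ w = z ∨ w = oc z ∨ w = ⊤) (w : L) : w ∈ B := by
  obtain ⟨h_sInf, h_sSup, h_oc, -, -, b, hb, hb_bot, hb_top⟩ := hB
  have hz : z ∈ B := by
    rcases hL b with rfl | rfl | rfl | rfl
    · exact absurd rfl hb_bot
    · exact hb
    · exact h_inv z ▸ h_oc _ hb
    · exact absurd rfl hb_top
  rcases hL w with rfl | rfl | rfl | rfl
  · simpa using h_sSup ∅ (Set.empty_subset B)
  · exact hz
  · exact h_oc z hz
  · simpa using h_sInf ∅ (Set.empty_subset B)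

end Complementation

section Daseinisation

variable {L : Type*} [CompleteLattice L] {B : Set L} {x y : L}

theorem le_das (B : Set L) (x : L) : x ≤ das B x :=
  le_sInf fun _ hy ↦ hy.2

theorem das_of_mem (hx : x ∈ B) : das B x = x :=
  le_antisymm (sInf_le ⟨hx, le_rfl⟩) (le_das B x)

theorem eq_bot_of_das_eq_top (hB : ⊥ ∈ B) (H : das B (x ⊓ y) = das B x ⊓ das B y)
    (hxy : Disjoint x y) (hx : das B x = ⊤) : y = ⊥ := by
  rw [hxy.eq_bot, das_of_mem hB, hx, top_inf_eq] at H
  exact le_bot_iff.1 (H ▸ le_das B y)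

theorem das_bot_pair_top_eq_top {a b : L} (ha : ¬ x ≤ a) (hb : ¬ x ≤ b) :
    das {⊥, a, b, ⊤} x = ⊤ := by
  refine sInf_eq_top.2 ?_
  rintro c ⟨rfl | rfl | rfl | rfl, hxc⟩
  · exact absurd (hxc.trans bot_le) ha
  · exact absurd hxc ha
  · exact absurd hxc hb
  · rfl

end Daseinisation

section PreservesInf

variable {L : Type*} [CompleteLattice L] {oc : L → L} {u v : L}

theorem le_or_le_oc_of_das_inf (hc : ∀ x, IsCompl x (oc x)) (h_inv : Function.Involutive oc)
    (H : ∀ B : Set L, IsCABS oc B → ∀ x y : L, das B (x ⊓ y) = das B x ⊓ das B y)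
    (hu_bot : u ≠ ⊥) (hu_top : u ≠ ⊤) (hv_top : v ≠ ⊤) : v ≤ u ∨ v ≤ oc u := by
  by_contra! ⟨hvu, hvu'⟩
  have das_inf := H _ (isCABS_bot_pair_top hc h_inv hu_bot hu_top) v (oc v)
  have hov_bot : oc v = ⊥ := eq_bot_of_das_eq_top (by simp) das_inf (hc v).disjoint
    (das_bot_pair_top_eq_top hvu hvu')
  exact right_ne_bot_of_isCompl (hc v) hv_top hov_bot

theorem eq_of_le_of_das_inf (hc : ∀ x, IsCompl x (oc x)) (h_inv : Function.Involutive oc)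
    (H : ∀ B : Set L, IsCABS oc B → ∀ x y : L, das B (x ⊓ y) = das B x ⊓ das B y)
    (hv_bot : v ≠ ⊥) (hu_top : u ≠ ⊤) (hvu : v ≤ u) : v = u := by
  have hv_top : v ≠ ⊤ := ne_top_of_le_ne_top hu_top hvu
  rcases le_or_le_oc_of_das_inf hc h_inv H hv_bot hv_top hu_top with huv | huv
  · exact le_antisymm hvu huv
  · exact absurd ((hc v).disjoint.eq_bot_of_le (hvu.trans huv)) hv_bot

end PreservesInf

theorem das_preserves_inf_iff_general {L : Type*} [CompleteLattice L] {oc : L → L}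
    (hc : ∀ x, IsCompl x (oc x)) (h_inv : Function.Involutive oc)
    {z : L} (hz_bot : z ≠ ⊥) (hz_top : z ≠ ⊤) :
    (∀ B : Set L, IsCABS oc B → ∀ x y : L, das B (x ⊓ y) = das B x ⊓ das B y) ↔
    (∀ w : L, w = ⊥ ∨ w = z ∨ w = oc z ∨ w = ⊤) := by
  refine ⟨fun H w ↦ ?_, fun hL B hB x y ↦ ?_⟩
  · by_cases hw_bot : w = ⊥
    · exact .inl hw_bot
    by_cases hw_top : w = ⊤
    · exact .inr (.inr (.inr hw_top))
    rcases le_or_le_oc_of_das_inf hc h_inv H hz_bot hz_top hw_top with hwz | hwz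
    · exact .inr (.inl (eq_of_le_of_das_inf hc h_inv H hw_bot hz_top hwz))
    · exact .inr (.inr (.inl
        (eq_of_le_of_das_inf hc h_inv H hw_bot (right_ne_top_of_isCompl (hc z) hz_bot) hwz)))
  · have das_eq (w : L) : das B w = w := das_of_mem (hB.mem_of_forall_eq h_inv hL w)
    rw [das_eq, das_eq, das_eq]

/-- Daseinisation preserves meets for every nontrivial complete atomic Boolean
subalgebra iff `L = {⊥, z, zᗮ, ⊤}`. -/
theorem das_preserves_inf_iff {L : Type*} [CompleteLattice L] (oc : L → L)
    (h_inf : ∀ x : L, x ⊓ oc x = ⊥) (h_sup : ∀ x : L, x ⊔ oc x = ⊤)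
    (h_anti : ∀ x y : L, x ≤ y → oc y ≤ oc x) (h_inv : ∀ x : L, oc (oc x) = x)
    (h_om : ∀ x y : L, x ≤ y → y = x ⊔ (y ⊓ oc x))
    (z : L) (hz1 : ⊥ < z) (hz2 : z < ⊤) :
    (∀ B : Set L, IsCABS oc B → ∀ x y : L, das B (x ⊓ y) = das B x ⊓ das B y) ↔
    (∀ w : L, w = ⊥ ∨ w = z ∨ w = oc z ∨ w = ⊤) :=
  das_preserves_inf_iff_general (fun x ↦ .of_eq (h_inf x) (h_sup x)) h_inv hz1.ne' hz2.ne
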